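/- Let (W₁*,…,W_J*, Z*) be a local minimizer of the sparse GCCA problem: minimize ∑_{j=1}^J ‖W_j‖₁ over W_j ∈ ℝ^{n_j×ℓ} and Z ∈ ℝ^{m×ℓ} subject to A_j W_j + B_j Z = 0 for all j = 1,…,J and ZᵀZ = I_ℓ. Then for each j there exist Lagrange multipliers Λ*_{1,j} ∈ ℝ^{r_j×ℓ} and Λ*_2 ∈ ℝ^{ℓ×ℓ} such that: A_jᵀ Λ*_{1,j} ∈ ∂‖W_j*‖₁ for every j, ∑_{j=1}^J B_jᵀ Λ*_{1,j} + Z* Λ*_2 = 0, A_j W_j* + B_j Z* = 0 for every j, and (Z*)ᵀ Z* = I_ℓ. -/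

import Mathlib

open Matrix Filter Topology

/-- The ℓ1 norm of a real matrix: sum of absolute values of all entries. -/
noncomputable def l1 {α β : Type*} [Fintype α] [Fintype β] (W : Matrix α β ℝ) : ℝ :=
  ∑ i, ∑ j, |W i j|

/-- The Frobenius (trace) inner product of two real matrices. -/
noncomputable def frobInner {α β : Type*} [Fintype α] [Fintype β] (M N : Matrix α β ℝ) : ℝ :=
  ∑ i, ∑ j, M i j * N i j

/-- The squared Frobenius norm of a real matrix. -/
noncomputable def frobSq {α β : Type*} [Fintype α] [Fintype β] (M : Matrix α β ℝ) : ℝ :=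
  ∑ i, ∑ j, (M i j) ^ 2

/-- The subdifferential of a (convex) function on real matrices at a point. -/
def subdiff {α β : Type*} [Fintype α] [Fintype β]
    (f : Matrix α β ℝ → ℝ) (x : Matrix α β ℝ) : Set (Matrix α β ℝ) :=
  {g | ∀ y, f x + frobInner g (y - x) ≤ f y}

noncomputable def dd (w d : ℝ) : ℝ := if w = 0 then |d| else SignType.sign w * d

lemma dd_smul (w c d : ℝ) (hc : 0 < c) : dd w (c * d) = c * dd w d := by
  unfold dd; split_ifs
  · rw [abs_mul, abs_of_pos hc]
  · ring

lemma dd_add (w x y : ℝ) : dd w (x + y) ≤ dd w x + dd w y := by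
  unfold dd; split_ifs
  · exact abs_add_le x y
  · exact le_of_eq (by ring)

lemma dd_le (w y : ℝ) : |w| + dd w (y - w) ≤ |y| := by
  unfold dd; split_ifs with h
  · simp [h]
  · rcases lt_or_gt_of_ne h with h | h
    · simp [sign_neg h, abs_of_neg h]; linarith [neg_abs_le y]
    · simp [sign_pos h, abs_of_pos h]; exact le_abs_self y

lemma dd_ev (w d : ℝ) : ∀ᶠ t in 𝓝[>] (0:ℝ), |w + t * d| = |w| + t * dd w d := by
  have hc : Tendsto (fun t : ℝ => w + t * d) (𝓝[>] 0) (𝓝 w) := by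
    have : Continuous (fun t : ℝ => w + t * d) := by fun_prop
    have := this.tendsto 0
    simp only [zero_mul, add_zero] at this
    exact this.mono_left nhdsWithin_le_nhds
  rcases lt_trichotomy w 0 with h | h | h
  · filter_upwards [hc.eventually (gt_mem_nhds h)] with t ht
    simp [dd, h.ne, sign_neg h, abs_of_neg h, abs_of_neg ht]; ring
  · filter_upwards [self_mem_nhdsWithin] with t ht
    simp [dd, h, abs_mul, abs_of_pos (show (0:ℝ) < t from ht)]
  · filter_upwards [hc.eventually (lt_mem_nhds h)] with t ht
    simp [dd, h.ne', sign_pos h, abs_of_pos h, abs_of_pos ht]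

lemma exists_retr {ℓ m : ℕ} (D : Matrix (Fin m) (Fin ℓ) ℝ) :
    ∃ E : ℝ → Matrix (Fin ℓ) (Fin ℓ) ℝ, Continuous E ∧ E 0 = 0 ∧
      ∀ t : ℝ, (1 + t • E t)ᵀ * (1 + t ^ 2 • (Dᵀ * D)) * (1 + t • E t) = 1 := by
  have hP : (Dᵀ * D).PosSemidef := by
    simpa using Matrix.posSemidef_conjTranspose_mul_self D
  obtain ⟨U, d, hd, hU, hU', hG⟩ : ∃ (U : Matrix (Fin ℓ) (Fin ℓ) ℝ) (d : Fin ℓ → ℝ),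
      (∀ i, 0 ≤ d i) ∧ Uᵀ * U = 1 ∧ U * Uᵀ = 1 ∧ Dᵀ * D = U * diagonal d * Uᵀ := by
    have h := hP.1.spectral_theorem
    have h1 := Unitary.coe_star_mul_self hP.1.eigenvectorUnitary
    have h2 := Unitary.coe_mul_star_self hP.1.eigenvectorUnitary
    refine ⟨hP.1.eigenvectorUnitary, hP.1.eigenvalues, hP.eigenvalues_nonneg, ?_, ?_, ?_⟩
    · simpa [Matrix.star_eq_conjTranspose] using h1
    · simpa [Matrix.star_eq_conjTranspose] using h2
    · rw [Unitary.conjStarAlgAut_apply] at h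
      simpa [Matrix.star_eq_conjTranspose, Function.comp_def] using h
  let s : ℝ → Fin ℓ → ℝ := fun t i => √(1 + t ^ 2 * d i)
  have hs : ∀ t i, 0 < s t i := fun t i =>
    Real.sqrt_pos.2 (by have := hd i; positivity)
  have hs2 : ∀ t i, s t i ^ 2 = 1 + t ^ 2 * d i := fun t i =>
    Real.sq_sqrt (by have := hd i; positivity)
  let e : ℝ → Fin ℓ → ℝ := fun t i => -(t * d i) / (s t i * (s t i + 1))
  have he : ∀ t i, 1 + t * e t i = 1 / s t i := by
    intro t i
    have h0 := hs t i
    have h2 := hs2 t i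
    simp only [e]
    field_simp
    nlinarith
  refine ⟨fun t => U * diagonal (e t) * Uᵀ, ?_, ?_, ?_⟩
  · have : Continuous e := by
      refine continuous_pi fun i => ?_
      refine Continuous.div (by fun_prop) (by simp only [s]; fun_prop) ?_
      intro t; have := hs t i; positivity
    have h3 : Continuous fun t => diagonal (e t) := this.matrix_diagonal
    exact (continuous_const.matrix_mul h3).matrix_mul continuous_const
  · have : e 0 = 0 := by ext i; simp [e]
    simp [this]
  · intro t
    have h1 : (1 : Matrix (Fin ℓ) (Fin ℓ) ℝ) + t • (U * diagonal (e t) * Uᵀ)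
        = U * diagonal (fun i => 1 / s t i) * Uᵀ := by
      have : diagonal (fun i => 1 / s t i) = 1 + t • diagonal (e t) := by
        rw [← diagonal_one, ← diagonal_smul, diagonal_add]
        congr 1; ext i; simp [← he]
      rw [this]; simp [mul_add, add_mul, hU']
    have h2 : (1 : Matrix (Fin ℓ) (Fin ℓ) ℝ) + t ^ 2 • (Dᵀ * D)
        = U * diagonal (fun i => s t i ^ 2) * Uᵀ := by
      have : diagonal (fun i => s t i ^ 2) = 1 + t ^ 2 • diagonal d := by
        rw [← diagonal_one, ← diagonal_smul, diagonal_add]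
        congr 1; ext i; simp [hs2]
      rw [this, hG]; simp [mul_add, add_mul, hU']
    have h3 : (U * diagonal (fun i => 1 / s t i) * Uᵀ)ᵀ
        = U * diagonal (fun i => 1 / s t i) * Uᵀ := by
      simp [transpose_mul, Matrix.mul_assoc]
    have h4 : ∀ x y : Fin ℓ → ℝ, U * diagonal x * Uᵀ * (U * diagonal y * Uᵀ)
        = U * diagonal (fun i => x i * y i) * Uᵀ := by
      intro x y
      calc _ = U * diagonal x * (Uᵀ * U) * diagonal y * Uᵀ := by
            simp only [Matrix.mul_assoc]
        _ = _ := by rw [hU, Matrix.mul_one, Matrix.mul_assoc U, diagonal_mul_diagonal]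
    simp only [h1]
    rw [h2, h3, h4, h4]
    have : (fun i => 1 / s t i * s t i ^ 2 * (1 / s t i)) = fun _ => (1:ℝ) := by
      ext i; have := hs t i; field_simp
    rw [this]; simp [hU']

lemma frob_eq {α β : Type*} [Fintype α] [Fintype β] (M N : Matrix α β ℝ) :
    frobInner M N = (Mᵀ * N).trace := by
  simp only [frobInner, trace, diag, mul_apply, transpose_apply]
  exact Finset.sum_comm

lemma frob_add_left {α β : Type*} [Fintype α] [Fintype β] (M M' N : Matrix α β ℝ) :
    frobInner (M + M') N = frobInner M N + frobInner M' N := by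
  simp [frob_eq, Matrix.add_mul]

lemma frob_add_right {α β : Type*} [Fintype α] [Fintype β] (M N N' : Matrix α β ℝ) :
    frobInner M (N + N') = frobInner M N + frobInner M N' := by
  simp [frob_eq, Matrix.mul_add]

lemma frob_sum_left {ι α β : Type*} [Fintype α] [Fintype β] (s : Finset ι)
    (M : ι → Matrix α β ℝ) (N : Matrix α β ℝ) :
    frobInner (∑ j ∈ s, M j) N = ∑ j ∈ s, frobInner (M j) N := by
  simp [frob_eq, transpose_sum, Matrix.sum_mul, trace_sum]

lemma frob_mul {α β γ : Type*} [Fintype α] [Fintype β] [Fintype γ]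
    (L : Matrix α γ ℝ) (A : Matrix α β ℝ) (X : Matrix β γ ℝ) :
    frobInner L (A * X) = frobInner (Aᵀ * L) X := by
  simp [frob_eq, Matrix.mul_assoc]

lemma frob_transpose {α β : Type*} [Fintype α] [Fintype β] (M : Matrix α β ℝ)
    (N : Matrix β α ℝ) : frobInner M Nᵀ = frobInner Mᵀ N := by
  simp only [frobInner, transpose_apply]
  exact Finset.sum_comm

lemma frob_rep {a b : ℕ} (φ : Matrix (Fin a) (Fin b) ℝ →ₗ[ℝ] ℝ) :
    ∃ L, ∀ X, φ X = frobInner L X := by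
  refine ⟨fun i j => φ (Matrix.single i j 1), fun X => ?_⟩
  conv_lhs => rw [matrix_eq_sum_single X]
  simp only [map_sum, frobInner]
  refine Finset.sum_congr rfl fun i _ => Finset.sum_congr rfl fun j _ => ?_
  have : Matrix.single i j (X i j) = X i j • Matrix.single i j (1:ℝ) := by simp
  rw [this, map_smul, smul_eq_mul, mul_comm]

lemma frob_self_zero {α β : Type*} [Fintype α] [Fintype β] (M : Matrix α β ℝ)
    (h : frobInner M M = 0) : M = 0 := by
  rw [frob_eq] at h
  exact trace_conjTranspose_mul_self_eq_zero_iff.1 (by simpa using h)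

/-- The directional derivative of `l1`. -/
noncomputable def dl1 {α β : Type*} [Fintype α] [Fintype β] (W D : Matrix α β ℝ) : ℝ :=
  ∑ i, ∑ j, dd (W i j) (D i j)

lemma dl1_smul {α β : Type*} [Fintype α] [Fintype β] (W D : Matrix α β ℝ) (c : ℝ)
    (hc : 0 < c) : dl1 W (c • D) = c * dl1 W D := by
  simp [dl1, dd_smul _ _ _ hc, Finset.mul_sum]

lemma dl1_zero {α β : Type*} [Fintype α] [Fintype β] (W : Matrix α β ℝ) :
    dl1 W 0 = 0 := by
  simp [dl1, dd]

lemma dl1_add {α β : Type*} [Fintype α] [Fintype β] (W D D' : Matrix α β ℝ) :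
    dl1 W (D + D') ≤ dl1 W D + dl1 W D' := by
  simp only [dl1, ← Finset.sum_add_distrib]
  exact Finset.sum_le_sum fun i _ => Finset.sum_le_sum fun j _ => dd_add _ _ _

lemma dl1_le {α β : Type*} [Fintype α] [Fintype β] (W Y : Matrix α β ℝ) :
    l1 W + dl1 W (Y - W) ≤ l1 Y := by
  simp only [dl1, l1, ← Finset.sum_add_distrib]
  exact Finset.sum_le_sum fun i _ => Finset.sum_le_sum fun j _ => dd_le _ _

lemma dl1_ev {α β : Type*} [Fintype α] [Fintype β] (W D : Matrix α β ℝ) :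
    ∀ᶠ t in 𝓝[>] (0:ℝ), l1 (W + t • D) = l1 W + t * dl1 W D := by
  have : ∀ᶠ t in 𝓝[>] (0:ℝ), ∀ i j, |W i j + t * D i j| = |W i j| + t * dd (W i j) (D i j) :=
    eventually_all.2 fun i => eventually_all.2 fun j => dd_ev _ _
  filter_upwards [this] with t ht
  simp [l1, dl1, ht, Finset.sum_add_distrib, Finset.mul_sum]

lemma l1_add_smul_le {α β : Type*} [Fintype α] [Fintype β] (W D : Matrix α β ℝ) (t : ℝ)
    (ht : 0 < t) : l1 (W + t • D) ≤ l1 W + t * l1 D := by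
  simp only [l1, Finset.mul_sum, ← Finset.sum_add_distrib]
  refine Finset.sum_le_sum fun i _ => Finset.sum_le_sum fun j _ => ?_
  calc _ ≤ |W i j| + |t * D i j| := abs_add_le _ _
    _ = _ := by rw [abs_mul, abs_of_pos ht]

lemma continuous_l1 {α β : Type*} [Fintype α] [Fintype β] :
    Continuous (l1 : Matrix α β ℝ → ℝ) := by
  unfold l1
  refine continuous_finsetSum _ fun i _ => continuous_finsetSum _ fun j _ => ?_
  exact (continuous_id.matrix_elem i j).abs

lemma continuous_frobSq {α β : Type*} [Fintype α] [Fintype β] :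
    Continuous (frobSq : Matrix α β ℝ → ℝ) := by
  unfold frobSq
  refine continuous_finsetSum _ fun i _ => continuous_finsetSum _ fun j _ => ?_
  exact (continuous_id.matrix_elem i j).pow 2

lemma tangent_nonneg (J ℓ m : ℕ) (n r : Fin J → ℕ)
    (A : ∀ j, Matrix (Fin (r j)) (Fin (n j)) ℝ)
    (B : ∀ j, Matrix (Fin (r j)) (Fin m) ℝ)
    (Wstar : ∀ j, Matrix (Fin (n j)) (Fin ℓ) ℝ)
    (Zstar : Matrix (Fin m) (Fin ℓ) ℝ)
    (hfeasW : ∀ j, A j * Wstar j + B j * Zstar = 0)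
    (hfeasZ : Zstarᵀ * Zstar = 1)
    (hlocal : ∃ ε > (0 : ℝ),
      ∀ (W : ∀ j, Matrix (Fin (n j)) (Fin ℓ) ℝ) (Z : Matrix (Fin m) (Fin ℓ) ℝ),
        (∀ j, A j * W j + B j * Z = 0) → Zᵀ * Z = 1 →
        (∑ j, frobSq (W j - Wstar j)) + frobSq (Z - Zstar) < ε →
        (∑ j, l1 (Wstar j)) ≤ ∑ j, l1 (W j))
    (dW : ∀ j, Matrix (Fin (n j)) (Fin ℓ) ℝ) (dZ : Matrix (Fin m) (Fin ℓ) ℝ)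
    (hd : ∀ j, A j * dW j + B j * dZ = 0)
    (hdZ : Zstarᵀ * dZ + dZᵀ * Zstar = 0) :
    0 ≤ ∑ j, dl1 (Wstar j) (dW j) := by
  obtain ⟨ε, hε, hmin⟩ := hlocal
  obtain ⟨E, hE, hE0, hR⟩ := exists_retr dZ
  let W : ℝ → ∀ j, Matrix (Fin (n j)) (Fin ℓ) ℝ := fun t j =>
    (Wstar j + t • dW j) * (1 + t • E t)
  let Z : ℝ → Matrix (Fin m) (Fin ℓ) ℝ := fun t => (Zstar + t • dZ) * (1 + t • E t)
  have hRc : Continuous fun t : ℝ => (1 : Matrix (Fin ℓ) (Fin ℓ) ℝ) + t • E t :=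
    continuous_const.add (continuous_id.smul hE)
  have hWl : ∀ j, Continuous fun t : ℝ => Wstar j + t • dW j := fun j =>
    continuous_const.add (continuous_id.smul continuous_const)
  have hWc : ∀ j, Continuous fun t => W t j := fun j => (hWl j).matrix_mul hRc
  have hZc : Continuous Z :=
    (continuous_const.add (continuous_id.smul continuous_const)).matrix_mul hRc
  have hclose : ∀ᶠ t in 𝓝[>] (0:ℝ),
      (∑ j, frobSq (W t j - Wstar j)) + frobSq (Z t - Zstar) < ε := by
    have hc : Continuous fun t => (∑ j, frobSq (W t j - Wstar j)) + frobSq (Z t - Zstar) :=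
      (continuous_finsetSum _ fun j _ =>
        continuous_frobSq.comp ((hWc j).sub continuous_const)).add
        (continuous_frobSq.comp (hZc.sub continuous_const))
    have h0 := hc.tendsto 0
    have hz : (∑ j, frobSq (W 0 j - Wstar j)) + frobSq (Z 0 - Zstar) = 0 := by
      simp [W, Z, frobSq]
    rw [hz] at h0
    exact (h0.mono_left nhdsWithin_le_nhds).eventually (gt_mem_nhds hε)
  have hfW : ∀ t j, A j * W t j + B j * Z t = 0 := by
    intro t j
    have : A j * W t j + B j * Z t
        = ((A j * Wstar j + B j * Zstar) + t • (A j * dW j + B j * dZ)) * (1 + t • E t) := by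
      simp only [W, Z, ← Matrix.mul_assoc, ← Matrix.add_mul]
      congr 1
      simp only [Matrix.mul_add, Matrix.mul_smul, smul_add]
      abel
    rw [this, hfeasW, hd]; simp
  have hfZ : ∀ t, (Z t)ᵀ * Z t = 1 := by
    intro t
    have h1 : (Zstar + t • dZ)ᵀ * (Zstar + t • dZ) = 1 + t ^ 2 • (dZᵀ * dZ) := by
      have : (Zstar + t • dZ)ᵀ * (Zstar + t • dZ)
          = Zstarᵀ * Zstar + t • (Zstarᵀ * dZ + dZᵀ * Zstar) + t ^ 2 • (dZᵀ * dZ) := by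
        simp only [transpose_add, transpose_smul, Matrix.mul_add, Matrix.add_mul,
          Matrix.mul_smul, Matrix.smul_mul, smul_add, smul_smul, pow_two]
        abel
      rw [this, hfeasZ, hdZ]; simp
    rw [← hR t, ← h1]
    simp only [Z, transpose_mul, Matrix.mul_assoc]
  have hev : ∀ᶠ t in 𝓝[>] (0:ℝ), ∀ j,
      l1 (Wstar j + t • dW j) = l1 (Wstar j) + t * dl1 (Wstar j) (dW j) :=
    eventually_all.2 fun j => dl1_ev _ _
  have key : ∀ᶠ t in 𝓝[>] (0:ℝ),
      0 ≤ ∑ j, dl1 (Wstar j) (dW j) + ∑ j, l1 ((Wstar j + t • dW j) * E t) := by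
    filter_upwards [hclose, hev, self_mem_nhdsWithin] with t h1 h2 ht
    have ht : (0:ℝ) < t := ht
    have h3 := hmin (W t) (Z t) (hfW t) (hfZ t) h1
    have h4 : ∀ j, l1 (W t j) ≤ l1 (Wstar j) + t * dl1 (Wstar j) (dW j)
        + t * l1 ((Wstar j + t • dW j) * E t) := by
      intro j
      rw [← h2 j]
      have : W t j = (Wstar j + t • dW j) + t • ((Wstar j + t • dW j) * E t) := by
        simp only [W, Matrix.mul_add, Matrix.mul_one, Matrix.mul_smul]
      rw [this]
      exact l1_add_smul_le _ _ _ ht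
    have h5 := h3.trans (Finset.sum_le_sum fun j _ => h4 j)
    simp only [Finset.sum_add_distrib, ← Finset.mul_sum] at h5
    have h6 : 0 ≤ t * (∑ j, dl1 (Wstar j) (dW j) + ∑ j, l1 ((Wstar j + t • dW j) * E t)) := by
      linarith
    exact nonneg_of_mul_nonneg_right h6 ht
  have hlim : Continuous fun t =>
      ∑ j, dl1 (Wstar j) (dW j) + ∑ j, l1 ((Wstar j + t • dW j) * E t) :=
    continuous_const.add (continuous_finsetSum _ fun j _ =>
      continuous_l1.comp ((hWl j).matrix_mul hE))
  have h0 := (hlim.tendsto 0).mono_left (nhdsWithin_le_nhds (s := Set.Ioi 0))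
  have hz : ∑ j, l1 ((Wstar j + (0:ℝ) • dW j) * E 0) = 0 := by simp [hE0, l1]
  rw [hz, add_zero] at h0
  exact ge_of_tendsto h0 key

/-- Lemma 1 of the paper, first-order optimality / KKT conditions.
If `(W*, Z*)` is a local minimizer of `min ∑_j ‖W_j‖₁` subject to
`A_j W_j + B_j Z = 0` for all `j` and `Zᵀ Z = I`, then there exist Lagrange
multipliers `Λ₁ⱼ`, `Λ₂` satisfying the KKT conditions. -/
theorem sparse_gcca_kkt (J ℓ m : ℕ) (n r : Fin J → ℕ)
    (A : ∀ j, Matrix (Fin (r j)) (Fin (n j)) ℝ)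
    (B : ∀ j, Matrix (Fin (r j)) (Fin m) ℝ)
    (Wstar : ∀ j, Matrix (Fin (n j)) (Fin ℓ) ℝ)
    (Zstar : Matrix (Fin m) (Fin ℓ) ℝ)
    (hfeasW : ∀ j, A j * Wstar j + B j * Zstar = 0)
    (hfeasZ : Zstarᵀ * Zstar = 1)
    (hlocal : ∃ ε > (0 : ℝ),
      ∀ (W : ∀ j, Matrix (Fin (n j)) (Fin ℓ) ℝ) (Z : Matrix (Fin m) (Fin ℓ) ℝ),
        (∀ j, A j * W j + B j * Z = 0) → Zᵀ * Z = 1 →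
        (∑ j, frobSq (W j - Wstar j)) + frobSq (Z - Zstar) < ε →
        (∑ j, l1 (Wstar j)) ≤ ∑ j, l1 (W j)) :
    ∃ (Λ₁ : ∀ j, Matrix (Fin (r j)) (Fin ℓ) ℝ) (Λ₂ : Matrix (Fin ℓ) (Fin ℓ) ℝ),
      (∀ j, (A j)ᵀ * Λ₁ j ∈ subdiff l1 (Wstar j)) ∧
      (∑ j, (B j)ᵀ * Λ₁ j) + Zstar * Λ₂ = 0 ∧
      (∀ j, A j * Wstar j + B j * Zstar = 0) ∧
      Zstarᵀ * Zstar = 1 := by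
  
  let Φ : ((∀ j, Matrix (Fin (n j)) (Fin ℓ) ℝ) × Matrix (Fin m) (Fin ℓ) ℝ) →ₗ[ℝ]
      ((∀ j, Matrix (Fin (r j)) (Fin ℓ) ℝ) × Matrix (Fin ℓ) (Fin ℓ) ℝ) :=
    { toFun := fun p => (fun j => A j * p.1 j + B j * p.2, Zstarᵀ * p.2 + p.2ᵀ * Zstar)
      map_add' := by
        intro p q
        refine Prod.ext ?_ ?_
        · funext j
          simp only [Prod.fst_add, Prod.snd_add, Pi.add_apply, Matrix.mul_add]
          abel
        · simp only [Prod.snd_add, Matrix.mul_add, transpose_add, Matrix.add_mul]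
          abel
      map_smul' := by
        intro c p
        refine Prod.ext ?_ ?_
        · funext j
          simp
        · simp }
  obtain ⟨g, hg0, hgle⟩ := exists_extension_of_le_sublinear
    (⟨LinearMap.ker Φ, 0⟩ : _ →ₗ.[ℝ] ℝ) (fun p => ∑ j, dl1 (Wstar j) (p.1 j))
    (by
      intro c hc p
      simp [dl1_smul _ _ _ hc, Finset.mul_sum])
    (by
      intro p q
      simp only [← Finset.sum_add_distrib]
      exact Finset.sum_le_sum fun j _ => dl1_add _ _ _)
    (by
      rintro ⟨p, hp⟩
      have hp : Φ p = 0 := hp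
      have h1 : ∀ j, A j * p.1 j + B j * p.2 = 0 := fun j =>
        congrFun (congrArg Prod.fst hp) j
      have h2 : Zstarᵀ * p.2 + p.2ᵀ * Zstar = 0 := congrArg Prod.snd hp
      exact tangent_nonneg J ℓ m n r A B Wstar Zstar hfeasW hfeasZ hlocal p.1 p.2 h1 h2)
  have hmem : g ∈ (LinearMap.ker Φ).dualAnnihilator := by
    rw [Submodule.mem_dualAnnihilator]
    intro p hp
    exact hg0 ⟨p, hp⟩
  rw [← LinearMap.range_dualMap_eq_dualAnnihilator_ker] at hmem
  obtain ⟨φ, hφ⟩ := hmem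
  have hφ : ∀ p, g p = φ (Φ p) := fun p => by rw [← hφ]; rfl
  choose Λ₁ hΛ₁ using fun j => frob_rep
    (φ ∘ₗ LinearMap.inl ℝ _ _ ∘ₗ LinearMap.single ℝ (fun j => Matrix (Fin (r j)) (Fin ℓ) ℝ) j)
  obtain ⟨S, hS⟩ := frob_rep (φ ∘ₗ LinearMap.inr ℝ _ _)
  have hrep : ∀ Y X, φ (Y, X) = ∑ j, frobInner (Λ₁ j) (Y j) + frobInner S X := by
    intro Y X
    rw [← hS X]
    simp only [← hΛ₁, LinearMap.comp_apply]
    rw [← map_sum, ← map_sum, ← map_add]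
    congr 1
    have : ∑ j, LinearMap.single ℝ (fun j => Matrix (Fin (r j)) (Fin ℓ) ℝ) j (Y j) = Y := by
      simpa using Finset.univ_sum_single Y
    rw [this]; simp
  have hrepg : ∀ V X, g (V, X) = ∑ j, frobInner (Λ₁ j) (A j * V j + B j * X)
      + frobInner S (Zstarᵀ * X + Xᵀ * Zstar) := fun V X => by
    rw [hφ]; exact hrep _ _
  refine ⟨Λ₁, S + Sᵀ, ?_, ?_, hfeasW, hfeasZ⟩
  · intro j Y
    refine le_trans ?_ (dl1_le (Wstar j) Y)
    have h := hgle (Pi.single j (Y - Wstar j), 0)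
    rw [hrepg] at h
    simp only [Matrix.mul_zero, add_zero, transpose_zero, Matrix.zero_mul] at h
    rw [Finset.sum_eq_single j, Finset.sum_eq_single j] at h
    · have h0 : frobInner S 0 = 0 := by simp [frobInner]
      simp only [Pi.single_eq_same, h0, add_zero, frob_mul] at h
      linarith
    · intro k _ hk
      simp [Pi.single_eq_of_ne hk, dl1_zero]
    · simp
    · intro k _ hk
      simp [Pi.single_eq_of_ne hk, frobInner]
    · simp
  · have hle : ∀ X, g (0, X) ≤ 0 := fun X => by
      have h := hgle (0, X)
      simpa [dl1_zero] using h
    have hz : ∀ X, g (0, X) = 0 := fun X => by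
      refine le_antisymm (hle X) ?_
      have h := hle (-X)
      have h' : g (0, -X) = - g (0, X) := by rw [← map_neg]; simp
      linarith
    apply frob_self_zero
    have hadj : ∀ X, g (0, X)
        = frobInner ((∑ j, (B j)ᵀ * Λ₁ j) + Zstar * (S + Sᵀ)) X := by
      intro X
      have h1 : Xᵀ * Zstar = (Zstarᵀ * X)ᵀ := by simp
      rw [hrepg, h1, frob_add_right, frob_transpose, frob_mul, frob_mul, frob_add_left,
        frob_sum_left, Matrix.mul_add, frob_add_left]
      simp [frob_mul]
    rw [← hadj, hz]
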